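/- Let q be a prime power with q odd, and let d ≥ 2 be an integer coprime to the characteristic of 𝔽_q. Then any collection B_1, …, B_n of pairwise mutually unbiased orthonormal bases of 𝔽_{q²}^d satisfies n ≤ d + 1; in particular 1 ≤ M_d(𝔽_{q²}) ≤ d + 1. -/

import Mathlib

open Finset

/-- The σ-Hermitian inner product on `F^d`, where σ is the `q`-power Frobenius:
`⟨u,v⟩ = ∑ j, (u j)^q * v j`. -/
def hermInner {F : Type*} [Field F] (q : ℕ) {d : ℕ} (u v : Fin d → F) : F :=
  ∑ j, (u j) ^ q * v j

/-- A family of `d` vectors in `F^d` is an orthonormal basis iff the pairwise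
Hermitian inner products are given by the Kronecker delta. -/
def IsON {F : Type*} [Field F] (q : ℕ) {d : ℕ} (b : Fin d → Fin d → F) : Prop :=
  ∀ i j, hermInner q (b i) (b j) = if i = j then 1 else 0

/-- Two orthonormal bases are mutually unbiased iff the relative norm
`N(α) = α · α^q = α^(q+1)` of every cross inner product equals `(d : F)⁻¹`. -/
def IsMUB {F : Type*} [Field F] (q : ℕ) {d : ℕ} (b c : Fin d → Fin d → F) : Prop :=
  ∀ i j, (hermInner q (b i) (c j)) ^ (q + 1) = (d : F)⁻¹

/-! Each unit vector `v` gives the rank-one matrix `v v*` of trace one, and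
`tr (u u* · v v*) = ⟨u, v⟩⟨v, u⟩ = N(⟨u, v⟩)`. Hence, after subtracting `d⁻¹ • 1`, matrices coming
from different bases are orthogonal for the trace form, and a linear relation splits into one
relation per basis; within one basis the only relations are the multiples of `∑ a, v_a v_a* = 1`.
So `n` bases span a space of traceless matrices of dimension at least `n * d - n`, which is at most
`d ^ 2 - 1 = (d + 1) * (d - 1)`. -/

section UnbiasedSystem

open Matrix Module

variable {F κ ι : Type*} [Field F] [Fintype ι]

theorem finrank_ker_traceLinearMap_add_one [Nonempty ι] :
    finrank F (LinearMap.ker (traceLinearMap ι F F)) + 1 = Fintype.card ι ^ 2 := by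
  classical
  have htrace : traceLinearMap ι F F ≠ 0 := by
    inhabit ι
    intro h
    simpa using LinearMap.congr_fun h (single default default 1)
  rw [Module.Dual.finrank_ker_add_one_of_ne_zero htrace, finrank_matrix, finrank_self, mul_one, sq]

variable [DecidableEq ι]

/-- The trace relations satisfied by the rank-one projections `P i a` onto the `a`-th vector of the
`i`-th of several mutually unbiased orthonormal bases. They are all that the dimension count needs,
so neither the vectors nor a conjugation of `F` appears here. -/
structure IsUnbiasedSystem (P : κ → ι → Matrix ι ι F) : Prop where
  trace_eq_one (i : κ) (a : ι) : (P i a).trace = 1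
  trace_mul_same (i : κ) (a b : ι) : (P i a * P i b).trace = if a = b then 1 else 0
  trace_mul_of_ne {i j : κ} (hij : i ≠ j) (a b : ι) :
    (P i a * P j b).trace = (Fintype.card ι : F)⁻¹

/-- The component `M - d⁻¹ • 1`, with `d` the size of `M`, of a trace-one matrix `M` in the space of
traceless matrices. -/
def tracelessPart (M : Matrix ι ι F) : Matrix ι ι F :=
  M - (Fintype.card ι : F)⁻¹ • 1

theorem trace_tracelessPart (hd : (Fintype.card ι : F) ≠ 0) {M : Matrix ι ι F}
    (hM : M.trace = 1) : (tracelessPart M).trace = 0 := by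
  simp [tracelessPart, hM, hd]

theorem trace_tracelessPart_mul (M : Matrix ι ι F) {N : Matrix ι ι F} (hN : N.trace = 1) :
    (tracelessPart M * N).trace = (M * N).trace - (Fintype.card ι : F)⁻¹ := by
  simp [tracelessPart, sub_mul, hN]

variable [Fintype κ]

/-- The map sending coefficients `g` to the linear combination `∑ x, g x • X x` of the traceless
parts `X (i, a)` of `P i a`; the bound comes from its rank and nullity. -/
def tracelessCombination (P : κ → ι → Matrix ι ι F) : (κ × ι → F) →ₗ[F] Matrix ι ι F :=
  Fintype.linearCombination F fun x => tracelessPart (P x.1 x.2)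

namespace IsUnbiasedSystem

variable {P : κ → ι → Matrix ι ι F}

theorem eq_average_of_tracelessCombination_eq_zero (hP : IsUnbiasedSystem P) {g : κ × ι → F}
    (hg : tracelessCombination P g = 0) (j : κ) (b : ι) :
    g (j, b) = (∑ a, g (j, a)) * (Fintype.card ι : F)⁻¹ := by
  have hother : ∀ i ≠ j, ∑ a, g (i, a) * (tracelessPart (P i a) * P j b).trace = 0 :=
    fun i hij => Finset.sum_eq_zero fun a _ => by
      rw [trace_tracelessPart_mul _ (hP.trace_eq_one j b), hP.trace_mul_of_ne hij, sub_self,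
        mul_zero]
  have hsum : ∑ i, ∑ a, g (i, a) * (tracelessPart (P i a) * P j b).trace = 0 := by
    simpa [tracelessCombination, Fintype.linearCombination_apply, Finset.sum_mul,
      trace_sum, Fintype.sum_prod_type] using
      congrArg (fun M => (M * P j b).trace) hg
  rw [Fintype.sum_eq_single j hother] at hsum
  simp only [trace_tracelessPart_mul _ (hP.trace_eq_one j b), hP.trace_mul_same, mul_sub, mul_ite,
    mul_one, mul_zero, Finset.sum_sub_distrib, Finset.sum_ite_eq', Finset.mem_univ, if_true,
    ← Finset.sum_mul] at hsum
  exact sub_eq_zero.mp hsum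

theorem finrank_ker_tracelessCombination_le (hP : IsUnbiasedSystem P) :
    finrank F (LinearMap.ker (tracelessCombination P)) ≤ Fintype.card κ := by
  have hker : LinearMap.ker (tracelessCombination P) ≤
      LinearMap.range (LinearMap.funLeft F F (Prod.fst : κ × ι → κ)) := fun g hg =>
    ⟨fun j => (∑ a, g (j, a)) * (Fintype.card ι : F)⁻¹,
      funext fun x => (hP.eq_average_of_tracelessCombination_eq_zero hg x.1 x.2).symm⟩
  calc finrank F (LinearMap.ker (tracelessCombination P))
      ≤ finrank F (LinearMap.range (LinearMap.funLeft F F (Prod.fst : κ × ι → κ))) :=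
        Submodule.finrank_mono hker
    _ ≤ finrank F (κ → F) := LinearMap.finrank_range_le _
    _ = Fintype.card κ := finrank_fintype_fun_eq_card F

theorem finrank_range_tracelessCombination_add_one_le (hP : IsUnbiasedSystem P)
    (hd : (Fintype.card ι : F) ≠ 0) :
    finrank F (LinearMap.range (tracelessCombination P)) + 1 ≤ Fintype.card ι ^ 2 := by
  have hpos : Fintype.card ι ≠ 0 := fun h => hd (by rw [h, Nat.cast_zero])
  have : Nonempty ι := Fintype.card_pos_iff.mp (Nat.pos_of_ne_zero hpos)
  have hrange : LinearMap.range (tracelessCombination P) ≤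
      LinearMap.ker (traceLinearMap ι F F) := by
    rw [tracelessCombination, Fintype.range_linearCombination, Submodule.span_le]
    rintro _ ⟨x, rfl⟩
    exact trace_tracelessPart hd (hP.trace_eq_one x.1 x.2)
  rw [← finrank_ker_traceLinearMap_add_one (F := F)]
  exact Nat.add_le_add_right (Submodule.finrank_mono hrange) 1

theorem card_le [Nontrivial ι] (hP : IsUnbiasedSystem P) (hd : (Fintype.card ι : F) ≠ 0) :
    Fintype.card κ ≤ Fintype.card ι + 1 := by
  have hnullity := hP.finrank_ker_tracelessCombination_le
  have hrank := hP.finrank_range_tracelessCombination_add_one_le hd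
  have hsum := LinearMap.finrank_range_add_finrank_ker (tracelessCombination P)
  rw [finrank_fintype_fun_eq_card, Fintype.card_prod] at hsum
  have hcount : Fintype.card κ * Fintype.card ι + 1 ≤ Fintype.card ι ^ 2 + Fintype.card κ := by
    lia
  have hcard : 1 < Fintype.card ι := Fintype.one_lt_card
  nlinarith [hcount, hcard]

end IsUnbiasedSystem

end UnbiasedSystem

section Hermitian

open Matrix

variable {F : Type*} [Field F] {q d : ℕ}

theorem isON_single (hq : q ≠ 0) : IsON q (fun i : Fin d => (Pi.single i 1 : Fin d → F)) := by
  intro i j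
  simp [hermInner, Pi.single_apply, ite_pow, hq, eq_comm]

/-- The rank-one matrix `v v*`, that is, the linear map `w ↦ ⟨v, w⟩ • v`; for a unit vector `v` it
is the orthogonal projection onto the line of `v`. -/
def hermProj (q : ℕ) (v : Fin d → F) : Matrix (Fin d) (Fin d) F :=
  vecMulVec v (v ^ q)

theorem trace_hermProj (v : Fin d → F) : (hermProj q v).trace = hermInner q v v := by
  rw [hermProj, trace_vecMulVec, dotProduct_comm]
  rfl

theorem trace_hermProj_mul_hermProj (u v : Fin d → F) :
    (hermProj q u * hermProj q v).trace = hermInner q u v * hermInner q v u := by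
  rw [hermProj, hermProj, vecMulVec_mul_vecMulVec, trace_vecMulVec, dotProduct_smul,
    dotProduct_comm u]
  rfl

variable [Fintype F]

theorem hermInner_swap (hq : IsPrimePow q) (hF : Fintype.card F = q ^ 2) (u v : Fin d → F) :
    hermInner q v u = hermInner q u v ^ q := by
  have hinvol (x : F) : (x ^ q) ^ q = x := by rw [← pow_mul, ← sq, ← hF, FiniteField.pow_card]
  obtain ⟨p, k, hp, -, rfl⟩ := hq
  have : Fact p.Prime := ⟨hp.nat_prime⟩
  have : CharP F p := charP_of_card_eq_prime_pow (hF.trans (pow_mul p k 2).symm)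
  simp only [hermInner, sum_pow_char_pow, mul_pow, hinvol, mul_comm]

theorem trace_hermProj_mul_hermProj_eq_pow (hq : IsPrimePow q) (hF : Fintype.card F = q ^ 2)
    (u v : Fin d → F) : (hermProj q u * hermProj q v).trace = hermInner q u v ^ (q + 1) := by
  rw [trace_hermProj_mul_hermProj, hermInner_swap hq hF u v, pow_succ']

theorem isUnbiasedSystem_hermProj {κ : Type*} (hq : IsPrimePow q) (hF : Fintype.card F = q ^ 2)
    {B : κ → Fin d → Fin d → F} (hON : ∀ i, IsON q (B i))
    (hMUB : ∀ i j, i ≠ j → IsMUB q (B i) (B j)) :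
    IsUnbiasedSystem fun i a => hermProj q (B i a) where
  trace_eq_one i a := by rw [trace_hermProj, hON i a a, if_pos rfl]
  trace_mul_same i a b := by
    rw [trace_hermProj_mul_hermProj_eq_pow hq hF, hON i a b, ite_pow, one_pow,
      zero_pow q.succ_ne_zero]
  trace_mul_of_ne hij a b := by
    rw [trace_hermProj_mul_hermProj_eq_pow hq hF, hMUB _ _ hij a b, Fintype.card_fin]

end Hermitian

theorem stmt0_general (q : ℕ) (hq : IsPrimePow q)
    (F : Type*) [Field F] [Fintype F] (hF : Fintype.card F = q ^ 2)
    (d : ℕ) (hd : 2 ≤ d) (hcop : Nat.Coprime d (ringChar F)) :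
    (∀ (n : ℕ) (B : Fin n → Fin d → Fin d → F),
        (∀ i, IsON q (B i)) → (∀ i j, i ≠ j → IsMUB q (B i) (B j)) → n ≤ d + 1)
    ∧ (∃ b : Fin d → Fin d → F, IsON q b) := by
  refine ⟨fun n B hON hMUB => ?_, _, isON_single hq.ne_zero⟩
  have : Nontrivial (Fin d) := Fin.nontrivial_iff_two_le.mpr hd
  have : Invertible (d : F) := invertibleOfCoprime hcop
  have hdF : (Fintype.card (Fin d) : F) ≠ 0 := by
    rw [Fintype.card_fin]
    exact Invertible.ne_zero (d : F)
  simpa only [Fintype.card_fin] using (isUnbiasedSystem_hermProj hq hF hON hMUB).card_le hdF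

/-- If `q` is an odd prime power and `d ≥ 2` is coprime to the
characteristic of `𝔽_q`, then any collection of `n` pairwise mutually unbiased
orthonormal bases of `𝔽_{q²}^d` has `n ≤ d + 1`; moreover at least one orthonormal
basis exists, so `1 ≤ M_d(𝔽_{q²}) ≤ d + 1`. -/
theorem stmt0 (q : ℕ) (hq : IsPrimePow q) (hodd : Odd q)
    (F : Type) [Field F] [Fintype F] (hF : Fintype.card F = q ^ 2)
    (d : ℕ) (hd : 2 ≤ d) (hcop : Nat.Coprime d (ringChar F)) :
    (∀ (n : ℕ) (B : Fin n → Fin d → Fin d → F),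
        (∀ i, IsON q (B i)) → (∀ i j, i ≠ j → IsMUB q (B i) (B j)) → n ≤ d + 1)
    ∧ (∃ b : Fin d → Fin d → F, IsON q b) :=
  stmt0_general q hq F hF d hd hcop
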